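/- A left self-injective semiprimary ring A such that the cardinality of A/Jac(A) is strictly smaller than the cardinality of A is quasi-Frobenius. -/

import Mathlib

open Cardinal

/-- A ring is *semiprimary* if its Jacobson radical `J` is nilpotent
(`J ^ n = 0`, expressed elementwise: every product of `n` elements of `J` vanishes)
and the quotient ring `A / J` is a semisimple ring. -/
def IsSemiprimary (A : Type*) [Ring A] : Prop :=
  IsSemisimpleRing (RingCon.Quotient (⊥ : TwoSidedIdeal A).jacobson.ringCon) ∧
  ∃ n : ℕ, 0 < n ∧ ∀ f : Fin n → A,
    (∀ i, f i ∈ Ideal.jacobson (⊥ : Ideal A)) → (List.ofFn f).prod = 0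

/-- A ring is *quasi-Frobenius* if it is left self-injective and left artinian. -/
def IsQuasiFrobenius (A : Type*) [Ring A] : Prop :=
  Module.Injective A A ∧ IsArtinianRing A

/-! Let `J` be the Jacobson radical of `A`, and let `ι` index the simple summands of the semisimple
module `J ⧸ J ^ 2`. A pigeonhole argument on the finitely many simple modules shows that every
simple left module embeds in `A`, so the subsets of `ι` are distinguished by linear maps
`J ⧸ J ^ 2 → A`. By self-injectivity these maps are right multiplications by elements of `A`,
whence `2 ^ #ι ≤ #A`. On the other hand, `J` being nilpotent, `A` is generated as a ring by
representatives of `A ⧸ J` and by `#ι` elements of `J`, whence `#A ≤ max (#(A ⧸ J)) (#ι) ℵ₀`.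
If `#(A ⧸ J) < #A`, Cantor's theorem forces `ι` to be finite, so `J` is finitely generated and
`A` is artinian. -/

universe u v w

section NilpotentIdeal

open scoped Pointwise

variable {A : Type u} [Ring A]

theorem ideal_pow_le_span_pow (I : Ideal A) (n : ℕ) : I ^ n ≤ Ideal.span ((I : Set A) ^ n) := by
  induction n with
  | zero => simp
  | succ n ih =>
    rw [Submodule.pow_succ, Ideal.mul_le]
    intro x hx y hy
    replace hx := ih hx
    induction hx using Submodule.span_induction with
    | mem x hx =>
      rw [pow_succ]
      exact Ideal.subset_span (Set.mul_mem_mul hx hy)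
    | zero => simp
    | add x z _ _ hx hz => simpa only [add_mul] using add_mem hx hz
    | smul a x _ hx => simpa only [smul_eq_mul, mul_assoc] using Ideal.mul_mem_left _ a hx

theorem ideal_pow_eq_zero_of_forall_prod_eq_zero {I : Ideal A} {n : ℕ}
    (h : ∀ f : Fin n → A, (∀ i, f i ∈ I) → (List.ofFn f).prod = 0) : I ^ n = 0 := by
  rw [Ideal.zero_eq_bot, eq_bot_iff]
  refine (ideal_pow_le_span_pow I n).trans (Ideal.span_le.2 fun x hx => ?_)
  obtain ⟨f, rfl⟩ := Set.mem_pow.1 hx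
  exact h _ fun i => (f i).2

/-- Nakayama's lemma for a nilpotent ideal, without any finiteness hypothesis on the module. -/
theorem submodule_eq_top_of_sup_smul_top_eq_top {M : Type v} [AddCommGroup M] [Module A M]
    {I : Ideal A} (hI : IsNilpotent I) {N : Submodule A M} (h : N ⊔ I • ⊤ = ⊤) : N = ⊤ := by
  obtain ⟨n, hn⟩ := hI
  have sup_pow_smul_eq_top (k : ℕ) : N ⊔ I ^ k • ⊤ = ⊤ := by
    induction k with
    | zero => simp [Submodule.pow_zero, Ideal.one_eq_top]
    | succ k ih =>
      rw [eq_top_iff]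
      calc ⊤ = N ⊔ I ^ k • (N ⊔ I • ⊤) := by rw [h, ih]
        _ = N ⊔ (I ^ k • N ⊔ I ^ (k + 1) • ⊤) := by
          rw [Submodule.smul_sup, Submodule.pow_succ, Submodule.mul_smul]
        _ ≤ N ⊔ I ^ (k + 1) • ⊤ :=
          sup_le le_sup_left (sup_le_sup_right Submodule.smul_le_right _)
  simpa [hn] using sup_pow_smul_eq_top n

theorem subalgebra_eq_top_of_isNilpotent_span {R : Type w} [CommSemiring R] [Algebra R A]
    {T : Set A} (hT : IsNilpotent (Ideal.span T)) {C : Subalgebra R A} (hTC : T ⊆ C)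
    (hC : ∀ a : A, ∃ c ∈ C, a - c ∈ Ideal.span T) : C = ⊤ := by
  obtain ⟨n, hn⟩ := hT
  have exists_sub_mem_pow (k : ℕ) : ∀ a : A, ∃ c ∈ C, a - c ∈ Ideal.span T ^ k := by
    induction k with
    | zero => exact fun a => ⟨0, C.zero_mem, by simp [Submodule.pow_zero, Ideal.one_eq_top]⟩
    | succ k ih =>
      have exists_sub_mem_pow_of_mem_span :
          ∀ y ∈ Ideal.span T, ∃ c ∈ C, y - c ∈ Ideal.span T ^ (k + 1) := by
        intro y hy
        induction hy using Submodule.span_induction with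
        | mem y hy => exact ⟨y, hTC hy, by simp⟩
        | zero => exact ⟨0, C.zero_mem, by simp⟩
        | add y z _ _ hy hz =>
          obtain ⟨c, hc, hyc⟩ := hy
          obtain ⟨d, hd, hzd⟩ := hz
          exact ⟨c + d, C.add_mem hc hd, by simpa only [add_sub_add_comm] using add_mem hyc hzd⟩
        | smul a y hy hyc =>
          obtain ⟨c, hc, hyc⟩ := hyc
          obtain ⟨d, hd, had⟩ := ih a
          have hsplit : a • y - d * c = (a - d) * y + d * (y - c) := by
            rw [smul_eq_mul]
            noncomm_ring
          refine ⟨d * c, C.mul_mem hd hc, hsplit ▸ add_mem ?_ (Ideal.mul_mem_left _ d hyc)⟩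
          exact Ideal.mul_mem_mul had hy
      intro a
      obtain ⟨c, hc, hac⟩ := hC a
      obtain ⟨d, hd, hacd⟩ := exists_sub_mem_pow_of_mem_span _ hac
      exact ⟨c + d, C.add_mem hc hd, by rwa [← sub_sub]⟩
  refine eq_top_iff.2 fun a _ => ?_
  obtain ⟨c, hc, hac⟩ := exists_sub_mem_pow n a
  rw [hn, Ideal.zero_eq_bot, Ideal.mem_bot, sub_eq_zero] at hac
  exact hac ▸ hc

theorem mk_le_of_isNilpotent_span {T : Set A} (hT : IsNilpotent (Ideal.span T)) :
    #A ≤ #(A ⧸ Ideal.span T) ⊔ #T ⊔ ℵ₀ := by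
  let representatives : Set A := Set.range (Quotient.out : A ⧸ Ideal.span T → A)
  have hadjoin : Algebra.adjoin ℤ (representatives ∪ T) = ⊤ := by
    refine subalgebra_eq_top_of_isNilpotent_span hT
      (Set.subset_union_right.trans Algebra.subset_adjoin) fun a => ?_
    refine ⟨(Submodule.Quotient.mk a : A ⧸ Ideal.span T).out,
      Algebra.subset_adjoin (Or.inl ⟨_, rfl⟩), ?_⟩
    exact (Submodule.Quotient.eq _).1 (Quotient.out_eq _).symm
  have hle : #A ≤ #(representatives ∪ T : Set A) ⊔ ℵ₀ := by
    calc #A = #(Algebra.adjoin ℤ (representatives ∪ T)) := by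
          rw [hadjoin]
          exact Subalgebra.topEquiv.toEquiv.cardinal_eq.symm
      _ ≤ #(representatives ∪ T : Set A) ⊔ ℵ₀ := by
          simpa [sup_comm, sup_left_comm] using
            Algebra.lift_cardinalMk_adjoin_le ℤ (representatives ∪ T)
  refine hle.trans (sup_le ?_ le_sup_right)
  refine (mk_union_le _ _).trans (add_le_of_le le_sup_right ?_ ?_)
  · exact mk_range_le.trans (le_sup_left.trans le_sup_left)
  · exact le_sup_right.trans le_sup_left

end NilpotentIdeal

section Semiprimary

variable {A : Type u} [Ring A] {M : Type v} [AddCommGroup M] [Module A M]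

theorem mem_jacobson_bot_iff_mem_ring_jacobson {x : A} :
    x ∈ (⊥ : TwoSidedIdeal A).jacobson ↔ x ∈ Ring.jacobson A := by
  rw [← Ideal.jacobson_bot, TwoSidedIdeal.mem_jacobson_iff, Ideal.mem_jacobson_iff]
  simp only [TwoSidedIdeal.mem_bot, Ideal.mem_bot]

theorem IsSemiprimary.isSemiprimaryRing (h : IsSemiprimary A) : IsSemiprimaryRing A := by
  obtain ⟨hss, n, -, hprod⟩ := h
  rw [Ideal.jacobson_bot] at hprod
  refine ⟨?_, n, ideal_pow_eq_zero_of_forall_prod_eq_zero hprod⟩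
  let φ : (⊥ : TwoSidedIdeal A).jacobson.ringCon.Quotient →+* A ⧸ Ring.jacobson A :=
    RingCon.lift _ (Ideal.Quotient.mk (Ring.jacobson A)) fun x y hxy => by
      rw [RingCon.ker_apply, Ideal.Quotient.mk_eq_mk_iff_sub_mem,
        ← mem_jacobson_bot_iff_mem_ring_jacobson]
      exact (TwoSidedIdeal.rel_iff _ _ _).1 hxy
  refine φ.isSemisimpleRing_of_surjective fun y => ?_
  obtain ⟨x, rfl⟩ := Ideal.Quotient.mk_surjective y
  exact ⟨(⊥ : TwoSidedIdeal A).jacobson.ringCon.mk' x, rfl⟩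

theorem isSemisimpleModule_iff_jacobson_le_annihilator [IsSemisimpleRing (A ⧸ Ring.jacobson A)] :
    IsSemisimpleModule A M ↔ Ring.jacobson A ≤ Module.annihilator A M := by
  refine ⟨fun _ => IsSemisimpleModule.jacobson_le_annihilator A M, fun h => ?_⟩
  have hM : Module.IsTorsionBySet A M (Ring.jacobson A) :=
    (Module.isTorsionBySet_iff_subset_annihilator A M).2 h
  let := hM.module
  exact hM.isSemisimpleModule_iff.1 inferInstance

theorem isSemisimpleModule_quotient_of_jacobson_smul_top_le
    [IsSemisimpleRing (A ⧸ Ring.jacobson A)] {N : Submodule A M}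
    (hN : Ring.jacobson A • ⊤ ≤ N) : IsSemisimpleModule A (M ⧸ N) := by
  refine isSemisimpleModule_iff_jacobson_le_annihilator.2 ?_
  rw [← SetLike.coe_subset_coe, ← Module.isTorsionBySet_iff_subset_annihilator,
    Module.isTorsionBySet_quotient_iff]
  exact fun m a ha => hN (Submodule.smul_mem_smul ha trivial)

instance isSemisimpleModule_quotient_jacobson [IsSemisimpleRing (A ⧸ Ring.jacobson A)] :
    IsSemisimpleModule A (A ⧸ Ring.jacobson A) :=
  isSemisimpleModule_quotient_of_jacobson_smul_top_le Ideal.mul_le_left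

theorem exists_isSimpleModule_le [IsSemiprimaryRing A] {N : Submodule A M} (hN : N ≠ ⊥) :
    ∃ S ≤ N, IsSimpleModule A S := by
  obtain ⟨n, hn⟩ := IsSemiprimaryRing.isNilpotent (R := A)
  have hnN : Ring.jacobson A ^ n • N = ⊥ := by simp [hn]
  clear hn
  induction n generalizing N with
  | zero => simp [Submodule.pow_zero, Ideal.one_eq_top, hN] at hnN
  | succ n ih =>
    by_cases hJN : Ring.jacobson A • N = ⊥
    · have : IsSemisimpleModule A N := isSemisimpleModule_iff_jacobson_le_annihilator.2
        (Submodule.le_annihilator_iff.2 hJN)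
      exact (IsSemisimpleModule.eq_bot_or_exists_simple_le N).resolve_left hN
    · rw [Submodule.pow_succ, Submodule.mul_smul] at hnN
      obtain ⟨S, hS, hsimple⟩ := ih hJN hnN
      exact ⟨S, hS.trans Submodule.smul_le_right, hsimple⟩

end Semiprimary

section SimpleModule

variable {A : Type u} [Ring A]

theorem exists_linearMap_quotient_jacobson_mk_eq_smul {M : Type v} [AddCommGroup M] [Module A M]
    [IsSemisimpleModule A M] (x : M) :
    ∃ f : (A ⧸ Ring.jacobson A) →ₗ[A] M, ∀ a : A, f (Ideal.Quotient.mk _ a) = a • x :=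
  ⟨(Ring.jacobson A).liftQ (LinearMap.toSpanSingleton A M x)
    (IsSemisimpleModule.jacobson_le_ker A A A M _), fun _ => rfl⟩

variable (S : Type v) [AddCommGroup S] [Module A S]

/-- The element `a` *acts only on `S`* if it annihilates every simple left module that is not
isomorphic to `S`; the simple modules are represented as the quotients by maximal left ideals.
For a primitive idempotent `a` of a semiprimary ring this says that `A a` is a projective cover
of `S`. -/
def ActsOnlyOn (a : A) : Prop :=
  ∀ I : Ideal A, I.IsMaximal → ∀ x : A ⧸ I, a • x ≠ 0 → Nonempty ((A ⧸ I) ≃ₗ[A] S)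

variable {S} in
theorem ActsOnlyOn.nonempty_linearEquiv {T : Type w} [AddCommGroup T] [Module A T] {a b c : A}
    (ha : ActsOnlyOn S a) (hc : ActsOnlyOn T c) (habc : a * b * c ∉ Ring.jacobson A) :
    Nonempty (S ≃ₗ[A] T) := by
  rw [Ring.jacobson_eq_sInf_isMaximal, Submodule.mem_sInf] at habc
  push Not at habc
  obtain ⟨I, hI, hIabc⟩ := habc
  let x : A ⧸ I := Submodule.Quotient.mk 1
  have hx : a • b • c • x ≠ 0 := by
    simpa [x, ← Submodule.Quotient.mk_smul, mul_assoc] using hIabc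
  have hcx : c • x ≠ 0 := fun h => hx (by simp [h])
  obtain ⟨e⟩ := ha I hI _ hx
  obtain ⟨e'⟩ := hc I hI _ hcx
  exact ⟨e.symm.trans e'⟩

variable [IsSimpleModule A S]

theorem exists_injective_to_quotient_jacobson [IsSemisimpleRing (A ⧸ Ring.jacobson A)] :
    ∃ i : S →ₗ[A] A ⧸ Ring.jacobson A, Function.Injective i := by
  have := IsSimpleModule.nontrivial A S
  obtain ⟨x, hx⟩ := exists_ne (0 : S)
  obtain ⟨f, hf⟩ := exists_linearMap_quotient_jacobson_mk_eq_smul (A := A) x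
  have hf0 : f ≠ 0 := by
    rintro rfl
    exact hx (by simpa using (hf 1).symm)
  obtain ⟨P, ⟨e⟩⟩ := f.linearEquiv_of_ne_zero hf0
  exact ⟨P.subtype ∘ₗ e.toLinearMap, P.injective_subtype.comp e.injective⟩

theorem isotypicComponent_quotient_jacobson_mem_isotypicComponents
    [IsSemisimpleRing (A ⧸ Ring.jacobson A)] :
    isotypicComponent A (A ⧸ Ring.jacobson A) S ∈ isotypicComponents A (A ⧸ Ring.jacobson A) := by
  obtain ⟨i, hi⟩ := exists_injective_to_quotient_jacobson (A := A) S
  let e := LinearEquiv.ofInjective i hi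
  exact ⟨LinearMap.range i, IsSimpleModule.congr e.symm, e.isotypicComponent_eq⟩

variable {S} in
theorem nonempty_linearEquiv_of_isotypicComponent_eq {T : Type w} [AddCommGroup T] [Module A T]
    [IsSimpleModule A T] {M : Type*} [AddCommGroup M] [Module A M] {i : S →ₗ[A] M}
    (hi : Function.Injective i) (h : isotypicComponent A M S = isotypicComponent A M T) :
    Nonempty (S ≃ₗ[A] T) := by
  let e := LinearEquiv.ofInjective i hi
  have : IsSimpleModule A (LinearMap.range i) := IsSimpleModule.congr e.symm
  have hle : LinearMap.range i ≤ isotypicComponent A M T := by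
    rw [← h, e.isotypicComponent_eq]
    exact Submodule.le_isotypicComponent _
  obtain ⟨e'⟩ := isIsotypicOfType_submodule_iff.1
    (IsIsotypicOfType.isotypicComponent A M T) _ hle
  exact ⟨e.trans e'⟩

theorem exists_isIdempotentElem_actsOnlyOn [IsSemiprimaryRing A] :
    ∃ e : A, IsIdempotentElem e ∧ e ≠ 0 ∧ ActsOnlyOn S e := by
  have := IsSimpleModule.nontrivial A S
  obtain ⟨i, hi⟩ := exists_injective_to_quotient_jacobson (A := A) S
  obtain ⟨r, hr⟩ := IsSemisimpleModule.extension_property i hi LinearMap.id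
  have r_i (x : S) : r (i x) = x := LinearMap.congr_fun hr x
  have mul_i_r_one (a : A) : Ideal.Quotient.mk _ a * i (r 1) = i (r (Ideal.Quotient.mk _ a)) := by
    calc Ideal.Quotient.mk _ a * i (r 1) = a • i (r 1) := rfl
      _ = i (r (a • 1)) := by simp only [map_smul]
      _ = i (r (Ideal.Quotient.mk _ a)) := by rw [← mul_one (Ideal.Quotient.mk _ a)]; rfl
  have hidem : IsIdempotentElem (i (r 1)) := by
    obtain ⟨a, ha⟩ := Ideal.Quotient.mk_surjective (i (r 1))
    have := mul_i_r_one a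
    rwa [ha, r_i] at this
  obtain ⟨n, hn⟩ := IsSemiprimaryRing.isNilpotent (R := A)
  obtain ⟨e, he, hei⟩ := exists_isIdempotentElem_eq_of_ker_isNilpotent
    (Ideal.Quotient.mk (Ring.jacobson A))
    (fun x hx => by
      rw [Ideal.mk_ker] at hx
      exact ⟨n, by simpa [hn] using Ideal.pow_mem_pow hx n⟩)
    _ (Ideal.Quotient.mk_surjective _) hidem
  refine ⟨e, he, ?_, fun I hI x hx => ?_⟩
  · rintro rfl
    obtain ⟨x, hx⟩ := exists_ne (0 : S)
    obtain ⟨a, ha⟩ := Ideal.Quotient.mk_surjective (i x)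
    have hix := mul_i_r_one a
    rw [← hei, map_zero, mul_zero, ha, r_i] at hix
    exact hx (hi (by rw [← hix, map_zero]))
  · have : IsSimpleModule A (A ⧸ I) := isSimpleModule_iff_isCoatom.2 hI.out
    obtain ⟨f, hf⟩ := exists_linearMap_quotient_jacobson_mk_eq_smul (A := A) x
    have hfi : f ∘ₗ i ≠ 0 := fun h => hx (by
      rw [← hf, hei]
      exact LinearMap.congr_fun h (r 1))
    exact ⟨(LinearEquiv.ofBijective _ (LinearMap.bijective_of_ne_zero hfi)).symm⟩

end SimpleModule

section SelfInjective

variable {A : Type u} [Ring A]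

theorem isUnit_of_sub_one_mem_ring_jacobson {r : A} (h : r - 1 ∈ Ring.jacobson A) : IsUnit r := by
  have exists_left_inverse {r : A} (h : r - 1 ∈ Ring.jacobson A) : ∃ s, s * r = 1 := by
    rw [← Ideal.jacobson_bot] at h
    obtain ⟨s, hs⟩ := Ideal.exists_mul_sub_mem_of_sub_one_mem_jacobson r h
    exact ⟨s, sub_eq_zero.1 hs⟩
  obtain ⟨s, hsr⟩ := exists_left_inverse h
  have hs : s - 1 ∈ Ring.jacobson A := by
    have hs_eq : s - 1 = -(s * (r - 1)) := by rw [mul_sub, hsr, mul_one, neg_sub]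
    exact hs_eq ▸ neg_mem (Ideal.mul_mem_left _ s h)
  obtain ⟨t, hts⟩ := exists_left_inverse hs
  exact ⟨⟨r, s, left_inv_eq_right_inv hts hsr ▸ hts, hsr⟩, rfl⟩

theorem exists_forall_eq_mul_of_injective (hinj : Module.Injective A A) {I : Ideal A}
    (f : I →ₗ[A] A) : ∃ a : A, ∀ x : I, f x = x * a := by
  obtain ⟨g, hg⟩ := Module.Baer.of_injective hinj I f
  refine ⟨g 1, fun x => ?_⟩
  rw [← hg x x.2, ← smul_eq_mul, ← map_smul, smul_eq_mul, mul_one]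

theorem exists_mul_mul_notMem_jacobson_of_linearEquiv (hinj : Module.Injective A A)
    {I I' : Ideal A} (hI : I ≠ ⊥) (φ : I ≃ₗ[A] I') {e e' : A}
    (he : ∀ x ∈ I, x * e = x) (he' : ∀ x ∈ I', x * e' = x) :
    ∃ a : A, e * a * e' ∉ Ring.jacobson A := by
  obtain ⟨a, ha⟩ := exists_forall_eq_mul_of_injective hinj (I'.subtype ∘ₗ φ.toLinearMap)
  obtain ⟨b, hb⟩ := exists_forall_eq_mul_of_injective hinj (I.subtype ∘ₗ φ.symm.toLinearMap)
  obtain ⟨x, hx, hx0⟩ := Submodule.exists_mem_ne_zero_of_ne_bot hI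
  have hφ : x * a = φ ⟨x, hx⟩ := (ha ⟨x, hx⟩).symm
  have hφ_symm : (φ ⟨x, hx⟩ : A) * b = x := by
    rw [← hb]
    simp
  have hfix : x * (e * a * e' * b) = x := by
    rw [← mul_assoc, ← mul_assoc, ← mul_assoc, he x hx, hφ, he' _ (φ ⟨x, hx⟩).2, hφ_symm]
  refine ⟨a, fun hmem => hx0 ?_⟩
  have hunit : IsUnit (1 - e * a * e' * b) := by
    refine isUnit_of_sub_one_mem_ring_jacobson ?_
    rw [sub_sub_cancel_left, neg_mem_iff]
    exact Ideal.mul_mem_right _ _ hmem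
  exact hunit.mul_left_eq_zero.1 (by rw [mul_sub, mul_one, hfix, sub_self])

/-- A ring is *left Kasch* if every simple left module embeds in it; the simple modules are
represented as the quotients by maximal left ideals, which keeps the definition in one universe. -/
def IsLeftKasch (A : Type u) [Ring A] : Prop :=
  ∀ I : Ideal A, I.IsMaximal → ∃ f : (A ⧸ I) →ₗ[A] A, f ≠ 0

theorem IsLeftKasch.exists_linearMap_ne_zero (hA : IsLeftKasch A) (S : Type v) [AddCommGroup S]
    [Module A S] [IsSimpleModule A S] : ∃ f : S →ₗ[A] A, f ≠ 0 := by
  obtain ⟨I, hI, ⟨e⟩⟩ := isSimpleModule_iff_quot_maximal.1 ‹IsSimpleModule A S›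
  obtain ⟨f, hf⟩ := hA I hI
  refine ⟨f ∘ₗ e.toLinearMap, fun h => hf ?_⟩
  exact (LinearMap.cancel_right e.surjective).1 (h.trans (LinearMap.zero_comp _).symm)

theorem isLeftKasch_of_injective [IsSemiprimaryRing A] (hinj : Module.Injective A A) :
    IsLeftKasch A := by
  intro I hI
  have : IsSimpleModule A (A ⧸ I) := isSimpleModule_iff_isCoatom.2 hI.out
  let C := isotypicComponents A (A ⧸ Ring.jacobson A)
  choose P hP hPc using fun c : C => c.2
  choose e heidem he0 heP using fun c => exists_isIdempotentElem_actsOnlyOn (A := A) (P c)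
  choose U hUe hU using fun c => exists_isSimpleModule_le
    (N := Ideal.span {e c}) (by simpa using he0 c)
  choose i hi using fun c => exists_injective_to_quotient_jacobson (A := A) (U c)
  have hU0 (c : C) : U c ≠ ⊥ := (isSimpleModule_iff_isAtom.1 (hU c)).1
  have mul_e (c : C) (x : A) (hx : x ∈ U c) : x * e c = x := by
    obtain ⟨a, rfl⟩ := Ideal.mem_span_singleton'.1 (hUe c hx)
    rw [mul_assoc, (heidem c).eq]
  -- The Nakayama map, sending a simple module to a simple submodule of its projective cover.
  let σ : C → C := fun c =>
    ⟨_, isotypicComponent_quotient_jacobson_mem_isotypicComponents (A := A) (U c)⟩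
  have hσ : Function.Injective σ := by
    intro c d hcd
    obtain ⟨φ⟩ := nonempty_linearEquiv_of_isotypicComponent_eq (hi c) (congrArg Subtype.val hcd)
    obtain ⟨a, ha⟩ :=
      exists_mul_mul_notMem_jacobson_of_linearEquiv hinj (hU0 c) φ (mul_e c) (mul_e d)
    obtain ⟨ψ⟩ := (heP c).nonempty_linearEquiv (heP d) ha
    exact Subtype.ext (by rw [hPc c, hPc d, ψ.isotypicComponent_eq])
  obtain ⟨c, hc⟩ := Finite.surjective_of_injective hσ
    ⟨_, isotypicComponent_quotient_jacobson_mem_isotypicComponents (A := A) (A ⧸ I)⟩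
  obtain ⟨φ⟩ := nonempty_linearEquiv_of_isotypicComponent_eq (hi c) (congrArg Subtype.val hc)
  refine ⟨(U c).subtype ∘ₗ φ.symm.toLinearMap, fun h => hU0 c ?_⟩
  have hsubtype : (U c).subtype = 0 :=
    (LinearMap.cancel_right φ.symm.surjective).1 (h.trans (LinearMap.zero_comp _).symm)
  rw [← Submodule.range_subtype (U c), hsubtype, LinearMap.range_zero]

end SelfInjective

section DualShatters

variable {A : Type u} [Ring A] {M : Type v} [AddCommGroup M] [Module A M]

variable (A) in
/-- The linear forms `M → A` *shatter* the family `g`, in the sense of Vapnik–Chervonenkis: every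
set of indices is the set where some linear form does not vanish on `g`. This is the substitute
for linear independence which makes a large family `g` produce many linear forms. -/
def DualShatters {ι : Type w} (g : ι → M) : Prop :=
  ∀ X : Set ι, ∃ f : M →ₗ[A] A, ∀ i, f (g i) ≠ 0 ↔ i ∈ X

theorem IsLeftKasch.exists_span_eq_top_dualShatters_of_isSemisimpleModule (hA : IsLeftKasch A)
    [IsSemisimpleModule A M] :
    ∃ (ι : Type v) (g : ι → M), Submodule.span A (Set.range g) = ⊤ ∧ DualShatters A g := by
  classical
  obtain ⟨ι, E, -, hsimple⟩ := IsSemisimpleModule.exists_linearEquiv_dfinsupp A M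
  choose f hf using fun m : ι => hA.exists_linearMap_ne_zero m.1
  choose x hx using fun m : ι => show ∃ x, f m x ≠ 0 from DFunLike.ne_iff.1 (hf m)
  have hspan : Submodule.span A (Set.range fun m : ι => DFinsupp.lsingle (R := A) m (x m)) = ⊤ := by
    rw [eq_top_iff, ← DFinsupp.iSup_range_lsingle, iSup_le_iff]
    rintro m _ ⟨y, rfl⟩
    have hxm : x m ≠ 0 := fun h => hx m (by simp [h])
    obtain ⟨a, rfl⟩ := IsSimpleModule.toSpanSingleton_surjective A hxm y
    rw [LinearMap.toSpanSingleton_apply, map_smul]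
    exact Submodule.smul_mem _ a (Submodule.subset_span ⟨m, rfl⟩)
  refine ⟨ι, fun m => E.symm (DFinsupp.lsingle (R := A) m (x m)), ?_, fun X => ?_⟩
  · have := congrArg (Submodule.map E.symm.toLinearMap) hspan
    rwa [Submodule.map_span, ← Set.range_comp, Submodule.map_top, LinearEquiv.range] at this
  · refine ⟨DFinsupp.lsum ℕ (fun m : ι => if m ∈ X then f m else 0) ∘ₗ E.toLinearMap, fun m => ?_⟩
    by_cases hm : m ∈ X <;> simp [hm, hx m]

theorem IsLeftKasch.exists_span_eq_top_dualShatters [IsSemiprimaryRing A] (hA : IsLeftKasch A) :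
    ∃ (ι : Type v) (g : ι → M), Submodule.span A (Set.range g) = ⊤ ∧ DualShatters A g := by
  let K : Submodule A M := Ring.jacobson A • ⊤
  have : IsSemisimpleModule A (M ⧸ K) := isSemisimpleModule_quotient_of_jacobson_smul_top_le le_rfl
  obtain ⟨ι, g, hspan, hg⟩ :=
    hA.exists_span_eq_top_dualShatters_of_isSemisimpleModule (M := M ⧸ K)
  choose g' hg' using fun i => K.mkQ_surjective (g i)
  refine ⟨ι, g', ?_, fun X => ?_⟩
  · refine submodule_eq_top_of_sup_smul_top_eq_top (IsSemiprimaryRing.isNilpotent (R := A)) ?_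
    have hmap : (Submodule.span A (Set.range g')).map K.mkQ = ⊤ := by
      rw [Submodule.map_span, ← Set.range_comp, ← hspan]
      exact congrArg _ (congrArg _ (funext hg'))
    rwa [K.map_mkQ_eq_top, sup_comm] at hmap
  · obtain ⟨f, hf⟩ := hg X
    exact ⟨f ∘ₗ K.mkQ, fun i => by rw [LinearMap.comp_apply, hg', hf]⟩

theorem DualShatters.two_power_mk_le (hinj : Module.Injective A A) {I : Ideal A} {ι : Type u}
    {g : ι → I} (hg : DualShatters A g) : 2 ^ #ι ≤ #A := by
  have exists_mul_ne_zero_iff (X : Set ι) : ∃ a : A, ∀ i, (g i : A) * a ≠ 0 ↔ i ∈ X := by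
    obtain ⟨f, hf⟩ := hg X
    obtain ⟨a, ha⟩ := exists_forall_eq_mul_of_injective hinj f
    exact ⟨a, fun i => by rw [← ha, hf]⟩
  choose a ha using exists_mul_ne_zero_iff
  rw [← mk_set]
  refine mk_le_of_injective (f := a) fun X Y hXY => Set.ext fun i => ?_
  rw [← ha X, hXY, ha Y]

end DualShatters

/-- A left self-injective semiprimary ring `A` with `|A / Jac(A)| < |A|` is quasi-Frobenius. -/
theorem faith_qf_of_card_semisimple_quotient_lt
    (A : Type*) [Ring A]
    (hsp : IsSemiprimary A) (hinj : Module.Injective A A)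
    (hcard : #(A ⧸ Ideal.jacobson (⊥ : Ideal A)) < #A) :
    IsQuasiFrobenius A := by
  have := hsp.isSemiprimaryRing
  rw [Ideal.jacobson_bot] at hcard
  obtain ⟨ι, g, hspan, hg⟩ :=
    (isLeftKasch_of_injective hinj).exists_span_eq_top_dualShatters (M := Ring.jacobson A)
  let T : Set A := Set.range fun i => (g i : A)
  have hT : Ideal.span T = Ring.jacobson A := by
    have := congrArg (Submodule.map (Ring.jacobson A).subtype) hspan
    rwa [Submodule.map_span, ← Set.range_comp, Submodule.map_subtype_top] at this
  have hlower : 2 ^ #ι ≤ #A := hg.two_power_mk_le hinj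
  have hupper : #A ≤ #ι ⊔ ℵ₀ := by
    have hle := mk_le_of_isNilpotent_span (hT ▸ IsSemiprimaryRing.isNilpotent (R := A))
    rw [hT, sup_assoc, le_sup_iff, or_iff_right hcard.not_ge] at hle
    exact hle.trans (sup_le_sup_right mk_range_le _)
  have : Finite ι := by
    by_contra hfin
    rw [not_finite_iff_infinite] at hfin
    rw [sup_eq_left.2 (aleph0_le_mk ι)] at hupper
    exact (cantor #ι).not_ge (hlower.trans hupper)
  have hfg : (Ring.jacobson A).FG := hT ▸ Submodule.fg_span (Set.finite_range _)
  exact ⟨hinj, IsSemiprimaryRing.isNoetherian_iff_isArtinian.1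
    (IsSemiprimaryRing.isNoetherianRing_iff_jacobson_fg.2 hfg)⟩
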